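/- Let (Ω, μ) be a probability space, T : Ω → Ω an ergodic measure-preserving transformation, and {J_ω} the associated ergodic family of Jacobi operators with almost-sure spectrum Σ, Lyapunov exponent L, and A = lim_{n→∞}(a_1(ω)⋯a_n(ω))^{1/n} for μ-a.e. ω. Let λ_m = min Σ and λ_M = max Σ. If L(E) = 0 for every E ∈ Σ, then |Σ| ≤ 4A ≤ λ_M − λ_m; if in addition Σ is an interval, then λ_M − λ_m = |Σ| = 4A. -/

import Mathlib

open MeasureTheory Filter
open scoped ENNReal NNReal

noncomputable section

attribute [local instance] Matrix.normedAddCommGroup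

/-- The Hilbert space `ℓ²(ℕ)` (with complex scalars). -/
abbrev ellTwo : Type := lp (fun _ : ℕ => ℂ) 2

/-- The off-diagonal Jacobi coefficients of the ergodic family generated by the sampling
function `f` and the transformation `T`: `a_n(ω) = f(Tⁿ ω)` for `n ≥ 1`, and `a_0(ω) = 0`. -/
def jacobiA {Ω : Type*} (f : Ω → ℝ) (T : Ω → Ω) : ℕ → Ω → ℝ
  | 0, _ => 0
  | n + 1, ω => f (T^[n + 1] ω)

/-- The diagonal Jacobi coefficients of the ergodic family generated by the sampling
function `g` and the transformation `T`: `b_n(ω) = g(Tⁿ ω)` for `n ≥ 1`. -/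
def jacobiB {Ω : Type*} (g : Ω → ℝ) (T : Ω → Ω) (n : ℕ) (ω : Ω) : ℝ := g (T^[n] ω)

/-- `IsJacobiOp a b J` says that the bounded operator `J` on `ℓ²(ℕ)` acts as the Jacobi
matrix with off-diagonal coefficients `a` and diagonal coefficients `b`:
`(J ψ)_n = a_{n-1} ψ_{n-1} + b_n ψ_n + a_n ψ_{n+1}` for `n ≥ 1` (sites are indexed from `1`,
so that the `k`-th coordinate of `ℓ²(ℕ)`, `k = 0, 1, 2, …`, holds `ψ_{k+1}`; the convention
`a_0 = 0` renders the term `a_0 ψ_0` absent). -/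
def IsJacobiOp (a b : ℕ → ℝ) (J : ellTwo →L[ℂ] ellTwo) : Prop :=
  ∀ ψ : ellTwo, ∀ k : ℕ,
    (J ψ) k = (a k : ℂ) * (if k = 0 then 0 else ψ (k - 1)) + (b (k + 1) : ℂ) * ψ k
      + (a (k + 1) : ℂ) * ψ (k + 1)

/-- The one-step transfer matrix of the ergodic Jacobi family at energy `z` and site `n ≥ 1`:
`A_z at site n = (1 / a_n(ω)) · [[z - b_n(ω), -a_{n-1}(ω)], [a_n(ω), 0]]`. -/
def transferMatrix {Ω : Type*} (f g : Ω → ℝ) (T : Ω → Ω) (z : ℂ) (n : ℕ) (ω : Ω) :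
    Matrix (Fin 2) (Fin 2) ℂ :=
  ((jacobiA f T n ω : ℝ) : ℂ)⁻¹ •
    Matrix.of ![![z - (jacobiB g T n ω : ℂ), -((jacobiA f T (n - 1) ω : ℝ) : ℂ)],
                ![((jacobiA f T n ω : ℝ) : ℂ), 0]]

/-- The transfer matrix cocycle `A_z^n(ω) = A_z(T^{n-1}ω) ⋯ A_z(Tω) A_z(ω)`, i.e. the
product of the one-step transfer matrices at sites `n, n-1, …, 1`. -/
def transferCocycle {Ω : Type*} (f g : Ω → ℝ) (T : Ω → Ω) (z : ℂ) (ω : Ω) :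
    ℕ → Matrix (Fin 2) (Fin 2) ℂ
  | 0 => 1
  | n + 1 => transferMatrix f g T z (n + 1) ω * transferCocycle f g T z ω n

lemma phi_lip (K : Set ℝ) (hK : IsCompact K) {x y : ℝ} (h : x ≤ y) :
    volume.real (K ∩ Set.Iic y) ≤ volume.real (K ∩ Set.Iic x) + (y - x) := by
  have h1 : K ∩ Set.Iic y ⊆ (K ∩ Set.Iic x) ∪ Set.Ioc x y := by
    rintro z ⟨hz, hzy⟩
    by_cases hzx : z ≤ x
    · exact Or.inl ⟨hz, hzx⟩
    · exact Or.inr ⟨not_le.mp hzx, hzy⟩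
  have hfin : volume (K ∩ Set.Iic x) ≠ ⊤ :=
    ne_top_of_le_ne_top hK.measure_lt_top.ne (measure_mono Set.inter_subset_left)
  have h2 : volume ((K ∩ Set.Iic x) ∪ Set.Ioc x y) ≠ ⊤ := by
    refine ne_top_of_le_ne_top ?_ (measure_union_le _ _)
    simp [hfin]
  calc volume.real (K ∩ Set.Iic y) ≤ volume.real ((K ∩ Set.Iic x) ∪ Set.Ioc x y) :=
        measureReal_mono h1 h2
    _ ≤ volume.real (K ∩ Set.Iic x) + volume.real (Set.Ioc x y) := measureReal_union_le _ _
    _ = _ := by rw [Real.volume_real_Ioc_of_le h]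

lemma phi_mono (K : Set ℝ) (hK : IsCompact K) {x y : ℝ} (h : x ≤ y) :
    volume.real (K ∩ Set.Iic x) ≤ volume.real (K ∩ Set.Iic y) := by
  refine measureReal_mono (Set.inter_subset_inter_right _ (Set.Iic_subset_Iic.mpr h)) ?_
  exact ne_top_of_le_ne_top hK.measure_lt_top.ne (measure_mono Set.inter_subset_left)

lemma phi_abs (K : Set ℝ) (hK : IsCompact K) (x y : ℝ) :
    |volume.real (K ∩ Set.Iic x) - volume.real (K ∩ Set.Iic y)| ≤ |x - y| := by
  rcases le_total x y with h | h
  · have h1 := phi_lip K hK h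
    have h2 := phi_mono K hK h
    rw [abs_sub_comm, abs_sub_comm x y, abs_of_nonneg (by linarith), abs_of_nonneg (by linarith)]
    linarith
  · have h1 := phi_lip K hK h
    have h2 := phi_mono K hK h
    rw [abs_of_nonneg (by linarith), abs_of_nonneg (by linarith)]
    linarith

lemma exists_point (K : Set ℝ) (hK : IsCompact K) (hne : K.Nonempty) (t : ℝ)
    (ht : t ∈ Set.Icc 0 (volume.real K)) :
    ∃ x ∈ K, volume.real (K ∩ Set.Iic x) = t := by
  have hcont : Continuous (fun x => volume.real (K ∩ Set.Iic x)) := by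
    refine (LipschitzWith.of_dist_le_mul (K := 1) fun x y => ?_).continuous
    simpa [Real.dist_eq] using phi_abs K hK x y
  have hab : sInf K ≤ sSup K := csInf_le_csSup hne hK.bddBelow hK.bddAbove
  have h0 : volume.real (K ∩ Set.Iic (sInf K)) = 0 := by
    have : K ∩ Set.Iic (sInf K) ⊆ {sInf K} := by
      rintro z ⟨hz, hz2⟩
      exact le_antisymm hz2 (csInf_le hK.bddBelow hz)
    rw [measureReal_def, measure_mono_null this (by simp)]
    simp
  have h1 : volume.real (K ∩ Set.Iic (sSup K)) = volume.real K := by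
    rw [Set.inter_eq_left.mpr]
    intro z hz
    exact le_csSup hK.bddAbove hz
  obtain ⟨y, hy, hyt⟩ := intermediate_value_Icc hab hcont.continuousOn (by rw [h0, h1]; exact ht)
  have hc : IsCompact (K ∩ Set.Iic y) := hK.inter_right isClosed_Iic
  have hn : (K ∩ Set.Iic y).Nonempty := ⟨sInf K, hK.sInf_mem hne, hy.1⟩
  have hx := hc.sSup_mem hn
  refine ⟨sSup (K ∩ Set.Iic y), hx.1, ?_⟩
  rw [← hyt]
  dsimp only
  congr 1
  ext z
  constructor
  · rintro ⟨hz, hz2⟩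
    exact ⟨hz, Set.mem_Iic.mpr ((Set.mem_Iic.mp hz2).trans (Set.mem_Iic.mp hx.2))⟩
  · rintro ⟨hz, hz2⟩
    exact ⟨hz, le_csSup hc.bddAbove ⟨hz, hz2⟩⟩

open Polynomial Polynomial.Chebyshev in
lemma sum_node_inv (n : ℕ) :
    ∑ i ∈ Finset.range (n + 1),
      (∏ j ∈ (Finset.range (n + 1)).erase i, |node n i - node n j|)⁻¹ = 2 ^ (n - 1) := by
  have hdeg : (Polynomial.Chebyshev.T ℝ n).degree < (Finset.range (n + 1)).card := by
    rw [Finset.card_range, degree_T]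
    norm_cast
    simp
  have h := Lagrange.coeff_eq_sum (strictAntiOn_node n).injOn hdeg
  have h2 : (Polynomial.Chebyshev.T ℝ n).coeff ((Finset.range (n + 1)).card - 1) = 2 ^ (n - 1) := by
    have h3 := leadingCoeff_T ℝ (n : ℤ)
    rw [leadingCoeff, natDegree_T] at h3
    simpa using h3
  rw [← h2, h]
  refine Finset.sum_congr rfl fun i hi => ?_
  have hi' : i ≤ n := by simpa [Nat.lt_succ_iff] using hi
  have hpos := zero_lt_prod_node_sub_node hi'
  rw [eval_T_real_node (by simpa using hi'), ← Finset.abs_prod]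
  rcases neg_one_pow_eq_or ℝ i with h | h
  · rw [h] at hpos ⊢
    rw [abs_of_pos (by linarith)]
    simp
  · rw [h] at hpos ⊢
    rw [abs_of_neg (by linarith), inv_neg]
    simp [div_eq_mul_inv]

open Polynomial Polynomial.Chebyshev in
/-- Polya's inequality. -/
lemma polya (n : ℕ) (hn : n ≠ 0) (P : ℝ[X]) (hP : P.degree ≤ n) (K : Set ℝ) (hK : IsCompact K)
    (r : ℝ) (hr : 0 ≤ r) (hPr : ∀ x ∈ K, |P.eval x| ≤ r) :
    |P.coeff n| * volume.real K ^ n ≤ r * 4 ^ n := by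
  rcases (measureReal_nonneg (μ := volume) (s := K)).eq_or_lt with hm | hm
  · rw [← hm, zero_pow hn, mul_zero]
    positivity
  have hne : K.Nonempty := by
    rw [Set.nonempty_iff_ne_empty]
    rintro rfl
    simp at hm
  set m := volume.real K with hmdef
  have hpt : ∀ i, ∃ x ∈ K, volume.real (K ∩ Set.Iic x) = m / 2 * (1 + node n i) := by
    intro i
    refine exists_point K hK hne _ ?_
    have := node_mem_Icc (n := n) (i := i)
    constructor
    · have : 0 ≤ 1 + node n i := by linarith [this.1]
      positivity
    · nlinarith [this.2]
  choose x hxK hx using hpt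
  have hsep : ∀ i j, m / 2 * |node n i - node n j| ≤ |x i - x j| := by
    intro i j
    have := phi_abs K hK (x i) (x j)
    rw [hx, hx, ← mul_sub, abs_mul, abs_of_pos (by positivity)] at this
    simpa using this
  have hnode : ∀ i ∈ Finset.range (n+1), ∀ j ∈ (Finset.range (n+1)).erase i,
      0 < |node n i - node n j| := by
    intro i hi j hj
    rw [abs_pos, sub_ne_zero]
    intro h
    rw [Finset.mem_erase] at hj
    exact hj.1 ((strictAntiOn_node n).injOn (by simpa using hj.2) (by simpa using hi) h.symm)
  have hinj : Set.InjOn x (Finset.range (n + 1)) := by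
    intro i hi j hj h
    by_contra hij
    have h1 := hnode i (by simpa using hi) j (by
      rw [Finset.mem_erase]; exact ⟨fun h => hij h.symm, by simpa using hj⟩)
    have h2 := hsep i j
    rw [h] at h2
    simp only [sub_self, abs_zero] at h2
    have : 0 < m / 2 * |node n i - node n j| := by positivity
    linarith
  have hdeg : P.degree < (Finset.range (n + 1)).card := by
    rw [Finset.card_range]
    refine lt_of_le_of_lt hP ?_
    norm_cast
    simp
  have hL := Lagrange.coeff_eq_sum hinj hdeg
  have hc : (Finset.range (n + 1)).card - 1 = n := by simp
  rw [hc] at hL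
  have hbound : |P.coeff n| ≤ r * ((m/2)^n)⁻¹ * 2 ^ (n-1) := by
    rw [hL, ← sum_node_inv, Finset.mul_sum]
    refine (Finset.abs_sum_le_sum_abs _ _).trans (Finset.sum_le_sum fun i hi => ?_)
    rw [abs_div, div_eq_mul_inv, mul_assoc, ← mul_inv, Finset.abs_prod]
    have hcard : ((Finset.range (n+1)).erase i).card = n := by
      rw [Finset.card_erase_of_mem hi]; simp
    have hprod : (m/2)^n * ∏ j ∈ (Finset.range (n+1)).erase i, |node n i - node n j|
        ≤ ∏ j ∈ (Finset.range (n+1)).erase i, |x i - x j| := by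
      conv_lhs => rw [← hcard, ← Finset.prod_const, hcard, ← Finset.prod_mul_distrib]
      exact Finset.prod_le_prod (fun j _ => by positivity) (fun j _ => hsep i j)
    have hpos : 0 < (m/2)^n * ∏ j ∈ (Finset.range (n+1)).erase i, |node n i - node n j| :=
      mul_pos (by positivity) (Finset.prod_pos (hnode i hi))
    exact mul_le_mul (hPr _ (hxK i)) (inv_anti₀ hpos hprod) (by positivity) hr
  calc |P.coeff n| * m ^ n ≤ (r * ((m/2)^n)⁻¹ * 2 ^ (n-1)) * m ^ n := by gcongr
    _ = r * (2 ^ n * 2 ^ (n-1)) := by rw [div_pow]; field_simp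
    _ ≤ r * (2 ^ n * 2 ^ n) := by
      gcongr
      · norm_num
      · omega
    _ = r * 4 ^ n := by rw [← mul_pow]; norm_num

lemma jac_pow (a b : ℕ → ℝ) (J : ellTwo →L[ℂ] ellTwo) (hJ : IsJacobiOp a b J) (k : ℕ) :
    (∀ j, k < j → ((J ^ k) (lp.single 2 0 (1:ℂ)) : ellTwo) j = 0) ∧
      ((J ^ k) (lp.single 2 0 (1:ℂ)) : ellTwo) k = ((∏ i ∈ Finset.Icc 1 k, a i : ℝ) : ℂ) := by
  induction k with
  | zero =>
    constructor
    · intro j hj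
      simp [lp.single_apply, hj.ne']
    · simp [lp.single_apply]
  | succ k ih =>
    obtain ⟨ih1, ih2⟩ := ih
    rw [pow_succ']
    constructor
    · intro j hj
      rw [mul_apply_eq_comp, hJ, ih1 j (by omega), ih1 (j+1) (by omega),
        if_neg (by omega), ih1 (j-1) (by omega)]
      simp
    · rw [mul_apply_eq_comp, hJ, ih1 (k+1) (by omega), ih1 (k+1+1) (by omega),
        if_neg (by omega), Nat.add_sub_cancel, ih2, Finset.prod_Icc_succ_top (by omega)]
      push_cast
      ring

lemma spec_iff (J : ellTwo →L[ℂ] ellTwo) (x : ℝ) :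
    x ∈ spectrum ℝ J ↔ (x : ℂ) ∈ spectrum ℂ J := by
  rw [spectrum.mem_iff, spectrum.mem_iff]
  have : algebraMap ℝ (ellTwo →L[ℂ] ellTwo) x = algebraMap ℂ (ellTwo →L[ℂ] ellTwo) (x : ℂ) := by
    rw [Algebra.algebraMap_eq_smul_one, Algebra.algebraMap_eq_smul_one]
    ext ψ k
    change (x • ψ : ellTwo) k = ((x : ℂ) • ψ : ellTwo) k
    rw [lp.coeFn_smul, lp.coeFn_smul]
    simp
  rw [this]

lemma spec_nonempty (J : ellTwo →L[ℂ] ellTwo) (hsa : IsSelfAdjoint J) :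
    (spectrum ℝ J).Nonempty := by
  have : Nontrivial ellTwo := by
    refine ⟨⟨lp.single 2 0 (1:ℂ), 0, fun h => ?_⟩⟩
    have h2 := congrArg (fun ψ : ellTwo => ψ 0) h
    simp [lp.single_apply] at h2
  obtain ⟨z, hz⟩ := spectrum.nonempty J
  have h := hsa.mem_spectrum_eq_re hz
  refine ⟨z.re, (spec_iff J _).mpr ?_⟩
  rw [← h]
  exact hz

open Polynomial in
lemma poly_bound (a b : ℕ → ℝ) (J : ellTwo →L[ℂ] ellTwo) (hJ : IsJacobiOp a b J)
    (hsa : IsSelfAdjoint J) (n : ℕ) (Q : ℝ[X]) (hQ : Q.natDegree ≤ n) (c : ℝ) (hc : 0 ≤ c)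
    (hb : ∀ x ∈ spectrum ℝ J, |Q.eval x| ≤ c) :
    |Q.coeff n * ∏ i ∈ Finset.Icc 1 n, a i| ≤ c := by
  set R : ℂ[X] := Q.map Complex.ofRealHom with hR
  have h1 : ‖aeval J R‖ ≤ c := by
    rw [← cfc_polynomial R J hsa.isStarNormal]
    refine norm_cfc_le hc fun z hz => ?_
    have h := hsa.mem_spectrum_eq_re hz
    have hz' : z.re ∈ spectrum ℝ J := by
      rw [spec_iff, ← h]
      exact hz
    have h3 : eval z R = ((Q.eval z.re : ℝ) : ℂ) := by
      conv_lhs => rw [h]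
      exact eval_map_apply (f := Complex.ofRealHom) z.re
    rw [h3, Complex.norm_real]
    exact hb _ hz'
  have h2 : ((aeval J R) (lp.single 2 0 (1:ℂ)) : ellTwo) n
      = ((Q.coeff n * ∏ i ∈ Finset.Icc 1 n, a i : ℝ) : ℂ) := by
    have hRd : R.natDegree ≤ n := natDegree_map_le.trans hQ
    rw [aeval_eq_sum_range' (n := n+1) (by omega), Finset.sum_range_succ]
    rw [add_apply, sum_apply]
    have h3 : ∀ i ∈ Finset.range n, ((R.coeff i • J ^ i) (lp.single 2 0 (1:ℂ)) : ellTwo) n = 0 := by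
      intro i hi
      have := (jac_pow a b J hJ i).1 n (by simpa using hi)
      rw [smul_apply, lp.coeFn_smul, Pi.smul_apply, this, smul_zero]
    have h4 := (jac_pow a b J hJ n).2
    rw [lp.coeFn_add, Pi.add_apply, lp.coeFn_sum, Finset.sum_apply, Finset.sum_eq_zero h3,
      smul_apply, lp.coeFn_smul, Pi.smul_apply, h4, zero_add, hR, coeff_map, smul_eq_mul,
      Complex.ofRealHom_eq_coe]
    push_cast
    ring
  have h5 : ‖((aeval J R) (lp.single 2 0 (1:ℂ)) : ellTwo) n‖ ≤ c := by
    refine (lp.norm_apply_le_norm (by norm_num) _ n).trans ?_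
    refine ((aeval J R).le_opNorm _).trans ?_
    rw [lp.norm_single (by norm_num)]
    simpa using h1
  rw [h2, Complex.norm_real] at h5
  exact h5

open Polynomial in
lemma prod_le (a b : ℕ → ℝ) (J : ellTwo →L[ℂ] ellTwo) (hJ : IsJacobiOp a b J)
    (hsa : IsSelfAdjoint J) (u v : ℝ) (huv : u < v) (hS : spectrum ℝ J ⊆ Set.Icc u v) (n : ℕ) :
    |∏ i ∈ Finset.Icc 1 n, a i| ≤ 2 * ((v - u) / 4) ^ n := by
  have hd : 0 < v - u := sub_pos.mpr huv
  set l : ℝ[X] := C (2 / (v - u)) * X + C (-(u + v) / (v - u)) with hl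
  have hlne : (2 / (v - u)) ≠ 0 := by positivity
  have hldeg : l.natDegree = 1 := natDegree_linear hlne
  have hllc : l.leadingCoeff = 2 / (v - u) := leadingCoeff_linear hlne
  set Q : ℝ[X] := (Chebyshev.T ℝ n).comp l with hQ
  have hTd : (Chebyshev.T ℝ n).natDegree = n := by simp [Chebyshev.natDegree_T]
  have hQd : Q.natDegree = n := by rw [hQ, natDegree_comp, hTd, hldeg, mul_one]
  have hQc : Q.coeff n = 2 ^ (n - 1) * (2 / (v - u)) ^ n := by
    have : Q.leadingCoeff = 2 ^ (n - 1) * (2 / (v - u)) ^ n := by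
      rw [hQ, leadingCoeff_comp (by rw [hldeg]; norm_num), hllc, hTd, Chebyshev.leadingCoeff_T]
      simp
    rwa [leadingCoeff, hQd] at this
  have h := poly_bound a b J hJ hsa n Q hQd.le 1 zero_le_one (by
    intro x hx
    have hx' := hS hx
    rw [hQ, eval_comp]
    apply Chebyshev.abs_eval_T_real_le_one
    have : eval x l = (2 * x - (u + v)) / (v - u) := by
      simp [hl]; field_simp; ring
    rw [this, abs_le, le_div_iff₀ hd, div_le_iff₀ hd]
    constructor <;> linarith [hx'.1, hx'.2])
  rw [abs_mul, hQc, abs_of_pos (by positivity)] at h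
  have h2 : (2:ℝ) ^ n ≤ 2 * 2 ^ (n-1) := by
    rw [← pow_succ']
    exact pow_le_pow_right₀ (by norm_num) (by omega)
  set p := |∏ i ∈ Finset.Icc 1 n, a i| with hp
  have hp0 : 0 ≤ p := abs_nonneg _
  have h3 : (2:ℝ) ^ n * (2 / (v-u))^n * p ≤ 2 := by
    calc (2:ℝ) ^ n * (2 / (v-u))^n * p ≤ (2 * 2 ^ (n-1)) * (2 / (v-u))^n * p := by gcongr
      _ = 2 * (2 ^ (n-1) * (2 / (v-u))^n * p) := by ring
      _ ≤ 2 * 1 := by gcongr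
      _ = 2 := by ring
  have h4 : (2:ℝ) ^ n * (2 / (v-u))^n * ((v - u) / 4) ^ n = 1 := by
    rw [← mul_pow, ← mul_pow]
    rw [show 2 * (2 / (v-u)) * ((v-u)/4) = 1 by field_simp; norm_num, one_pow]
  calc p = ((2:ℝ) ^ n * (2 / (v-u))^n * p) * ((v - u) / 4) ^ n := by
        linear_combination (-p) * h4
    _ ≤ 2 * ((v - u) / 4) ^ n := by gcongr

open Polynomial in
/-- The (normalized) orthogonal polynomials attached to Jacobi coefficients. -/
def jpol (a b : ℕ → ℝ) : ℕ → ℝ[X]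
  | 0 => 1
  | 1 => C (a 1)⁻¹ * (X - C (b 1))
  | n + 2 => C (a (n + 2))⁻¹ * ((X - C (b (n + 2))) * jpol a b (n + 1) - C (a (n + 1)) * jpol a b n)

open Polynomial in
lemma jpol_deg (a b : ℕ → ℝ) (n : ℕ) :
    ((jpol a b n).natDegree ≤ n ∧ (jpol a b n).coeff n = (∏ i ∈ Finset.Icc 1 n, a i)⁻¹) ∧
    ((jpol a b (n+1)).natDegree ≤ n + 1 ∧
      (jpol a b (n+1)).coeff (n+1) = (∏ i ∈ Finset.Icc 1 (n+1), a i)⁻¹) := by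
  induction n with
  | zero =>
    refine ⟨⟨by simp [jpol], by simp [jpol]⟩, ?_, ?_⟩
    · simp only [jpol, zero_add]
      refine (natDegree_C_mul_le _ _).trans ?_
      rw [natDegree_X_sub_C]
    · simp [jpol, coeff_X, coeff_C]
  | succ n ih =>
    obtain ⟨⟨h1, h2⟩, h3, h4⟩ := ih
    refine ⟨⟨h3, h4⟩, ?_, ?_⟩
    · simp only [jpol]
      refine (natDegree_C_mul_le _ _).trans ?_
      refine (natDegree_sub_le _ _).trans (max_le ?_ ?_)
      · refine natDegree_mul_le.trans ?_
        rw [natDegree_X_sub_C]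
        omega
      · exact (natDegree_C_mul_le _ _).trans (by omega)
    · simp only [jpol]
      rw [coeff_C_mul, coeff_sub, sub_mul, coeff_sub, coeff_X_mul, coeff_C_mul, coeff_C_mul, h4,
        coeff_eq_zero_of_natDegree_lt (lt_of_le_of_lt h3 (by omega)),
        coeff_eq_zero_of_natDegree_lt (lt_of_le_of_lt h1 (by omega)),
        Finset.prod_Icc_succ_top (b := n+1) (by omega)]
      simp [mul_comm]

lemma cocycle_entry {Ω : Type*} (f g : Ω → ℝ) (T : Ω → Ω) (hf : ∀ ω, f ω ≠ 0) (E : ℝ) (ω : Ω)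
    (n : ℕ) :
    transferCocycle f g T (E : ℂ) ω (n+1) 0 0 =
      (((jpol (fun n => jacobiA f T n ω) (fun n => jacobiB g T n ω) (n+1)).eval E : ℝ) : ℂ) ∧
    transferCocycle f g T (E : ℂ) ω (n+1) 1 0 =
      (((jpol (fun n => jacobiA f T n ω) (fun n => jacobiB g T n ω) n).eval E : ℝ) : ℂ) := by
  have ha : ∀ k, ((jacobiA f T (k+1) ω : ℝ) : ℂ) ≠ 0 := by
    intro k
    simpa [jacobiA] using hf _
  induction n with
  | zero =>
    have h0 := ha 0
    rw [zero_add] at h0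
    constructor
    · simp [transferCocycle, transferMatrix, jpol]
    · simp [transferCocycle, transferMatrix, jpol, h0]
  | succ n ih =>
    obtain ⟨h1, h2⟩ := ih
    have h0 := ha (n+1)
    rw [transferCocycle, Matrix.mul_apply, Matrix.mul_apply, Fin.sum_univ_two, Fin.sum_univ_two,
      h1, h2]
    constructor
    · simp [transferMatrix, jpol]
      ring
    · simp [transferMatrix, h0]

lemma measurable_jpol {Ω : Type*} [MeasurableSpace Ω] (a b : ℕ → Ω → ℝ)
    (ha : ∀ n, Measurable (a n)) (hb : ∀ n, Measurable (b n)) (n : ℕ) :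
    Measurable (fun p : Ω × ℝ => (jpol (fun n => a n p.1) (fun n => b n p.1) n).eval p.2) ∧
    Measurable (fun p : Ω × ℝ => (jpol (fun n => a n p.1) (fun n => b n p.1) (n+1)).eval p.2) := by
  have ha' : ∀ n, Measurable (fun p : Ω × ℝ => a n p.1) := fun n => (ha n).comp measurable_fst
  have hb' : ∀ n, Measurable (fun p : Ω × ℝ => b n p.1) := fun n => (hb n).comp measurable_fst
  induction n with
  | zero =>
    constructor
    · simp [jpol]
    · simp only [jpol, zero_add, Polynomial.eval_mul, Polynomial.eval_sub, Polynomial.eval_C,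
        Polynomial.eval_X]
      exact (ha' 1).inv.mul (measurable_snd.sub (hb' 1))
  | succ n ih =>
    refine ⟨ih.2, ?_⟩
    simp only [jpol, Polynomial.eval_mul, Polynomial.eval_sub, Polynomial.eval_C,
        Polynomial.eval_X]
    exact (ha' (n+2)).inv.mul (((measurable_snd.sub (hb' (n+2))).mul ih.2).sub
      ((ha' (n+1)).mul ih.1))

lemma upper_part (a b : ℕ → ℝ) (ha : ∀ n, 0 < a (n+1)) (S : Set ℝ) (hS : IsCompact S) (A δ : ℝ)
    (hA : Tendsto (fun n : ℕ => (∏ i ∈ Finset.Icc 1 n, a i) ^ ((n : ℝ)⁻¹)) atTop (nhds A))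
    (h : ∀ᵐ E ∂(volume.restrict S), ∃ N : ℕ, ∀ n : ℕ, N ≤ n →
      |(jpol a b n).eval E| ≤ Real.exp (n * δ)) :
    volume S ≤ ENNReal.ofReal (4 * Real.exp δ * A) := by
  set K : ℕ → Set ℝ := fun n => S ∩ {E | |(jpol a b n).eval E| ≤ Real.exp (n * δ)} with hKdef
  have hK : ∀ n, IsCompact (K n) := fun n => hS.inter_right
    (isClosed_le ((jpol a b n).continuous.abs) continuous_const)
  have hKm : ∀ n, n ≠ 0 → volume.real (K n) ≤
      4 * Real.exp δ * (∏ i ∈ Finset.Icc 1 n, a i) ^ ((n : ℝ)⁻¹) := by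
    intro n hn
    obtain ⟨⟨hd, hc⟩, -⟩ := jpol_deg a b n
    have hp : 0 < ∏ i ∈ Finset.Icc 1 n, a i := by
      refine Finset.prod_pos fun i hi => ?_
      rw [Finset.mem_Icc] at hi
      obtain ⟨k, rfl⟩ : ∃ k, i = k + 1 := ⟨i - 1, by omega⟩
      exact ha k
    have h1 := polya n hn (jpol a b n) (Polynomial.degree_le_of_natDegree_le hd) (K n) (hK n)
      (Real.exp (n * δ)) (Real.exp_pos _).le (fun x hx => hx.2)
    rw [hc, abs_of_pos (inv_pos.mpr hp), inv_mul_le_iff₀ hp] at h1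
    refine le_of_pow_le_pow_left₀ hn (by positivity) ?_
    rw [mul_pow, mul_pow, Real.rpow_inv_natCast_pow hp.le hn, ← Real.exp_nat_mul]
    linarith
  have hG : ∀ N, volume (⋂ n ≥ N, K n) ≤ ENNReal.ofReal (4 * Real.exp δ * A) := by
    intro N
    have ht : Tendsto (fun n : ℕ => ENNReal.ofReal
        (4 * Real.exp δ * (∏ i ∈ Finset.Icc 1 n, a i) ^ ((n : ℝ)⁻¹))) atTop
        (nhds (ENNReal.ofReal (4 * Real.exp δ * A))) :=
      (ENNReal.continuous_ofReal.tendsto _).comp (hA.const_mul _)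
    refine ge_of_tendsto ht ?_
    filter_upwards [eventually_ge_atTop N, eventually_ne_atTop 0] with n hn hn0
    calc volume (⋂ n ≥ N, K n) ≤ volume (K n) := measure_mono (Set.biInter_subset_of_mem hn)
      _ = ENNReal.ofReal (volume.real (K n)) := by
        rw [ofReal_measureReal (hK n).measure_lt_top.ne]
      _ ≤ _ := ENNReal.ofReal_le_ofReal (hKm n hn0)
  have hmono : Monotone (fun N : ℕ => ⋂ n ≥ N, K n) := by
    intro N M hNM
    exact Set.biInter_subset_biInter_left (fun n hn => le_trans hNM hn)
  calc volume S ≤ volume (⋃ N : ℕ, ⋂ n ≥ N, K n) := by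
        rw [ae_restrict_iff' hS.measurableSet] at h
        refine measure_mono_ae ?_
        filter_upwards [h] with E hE hES
        obtain ⟨N, hN⟩ := hE hES
        refine Set.mem_iUnion.mpr ⟨N, Set.mem_iInter₂.mpr fun n hn => ⟨hES, hN n hn⟩⟩
    _ = ⨆ N : ℕ, volume (⋂ n ≥ N, K n) := hmono.measure_iUnion
    _ ≤ _ := iSup_le hG

lemma lower_part (a b : ℕ → ℝ) (ha : ∀ n, 0 < a (n+1)) (J : ellTwo →L[ℂ] ellTwo)
    (hJ : IsJacobiOp a b J) (hsa : IsSelfAdjoint J) (hS : IsCompact (spectrum ℝ J)) (A : ℝ)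
    (hA : Tendsto (fun n : ℕ => (∏ i ∈ Finset.Icc 1 n, a i) ^ ((n : ℝ)⁻¹)) atTop (nhds A)) :
    4 * A ≤ sSup (spectrum ℝ J) - sInf (spectrum ℝ J) := by
  set S := spectrum ℝ J with hSdef
  have hne : S.Nonempty := spec_nonempty J hsa
  have hle : sInf S ≤ sSup S := csInf_le_csSup hne hS.bddBelow hS.bddAbove
  refine le_of_forall_pos_le_add fun η hη => ?_
  set d := sSup S + η - sInf S with hd
  have hdpos : 0 < d := by linarith
  have hsub : S ⊆ Set.Icc (sInf S) (sSup S + η) := fun x hx =>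
    ⟨csInf_le hS.bddBelow hx, by linarith [le_csSup hS.bddAbove hx]⟩
  have hb : ∀ n : ℕ, n ≠ 0 → (∏ i ∈ Finset.Icc 1 n, a i) ^ ((n : ℝ)⁻¹) ≤
      2 ^ ((n : ℝ)⁻¹) * (d / 4) := by
    intro n hn
    have hp : 0 < ∏ i ∈ Finset.Icc 1 n, a i := by
      refine Finset.prod_pos fun i hi => ?_
      rw [Finset.mem_Icc] at hi
      obtain ⟨k, rfl⟩ : ∃ k, i = k + 1 := ⟨i - 1, by omega⟩
      exact ha k
    have h1 := prod_le a b J hJ hsa (sInf S) (sSup S + η) (by linarith) hsub n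
    rw [abs_of_pos hp, ← hd] at h1
    refine le_of_pow_le_pow_left₀ hn (by positivity) ?_
    rw [mul_pow, Real.rpow_inv_natCast_pow hp.le hn, Real.rpow_inv_natCast_pow (by norm_num) hn]
    exact h1
  have ht : Tendsto (fun n : ℕ => (2:ℝ) ^ ((n : ℝ)⁻¹) * (d / 4)) atTop (nhds (1 * (d / 4))) := by
    refine Tendsto.mul_const _ ?_
    have h2 : Tendsto (fun x : ℝ => (2:ℝ) ^ x) (nhds 0) (nhds ((2:ℝ) ^ (0:ℝ))) :=
      Real.continuousAt_const_rpow (by norm_num)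
    rw [Real.rpow_zero] at h2
    exact h2.comp tendsto_inv_atTop_nhds_zero_nat
  have := le_of_tendsto_of_tendsto hA ht (by
    filter_upwards [eventually_ne_atTop 0] with n hn using hb n hn)
  linarith

/-- Let `{J_ω}` be an ergodic family of Jacobi operators with almost-sure
spectrum `Σ`, Lyapunov exponent `L`, and `A = lim_{n→∞} (a_1(ω)⋯a_n(ω))^{1/n}` for a.e. `ω`,
and let `λ_m = min Σ`, `λ_M = max Σ`. If `L(E) = 0` for every `E ∈ Σ`, then
`|Σ| ≤ 4A ≤ λ_M - λ_m`; if in addition `Σ` is an interval, then `λ_M - λ_m = |Σ| = 4A`. -/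
theorem zero_lyapunov_bounds {Ω : Type*} [MeasurableSpace Ω] (μ : Measure Ω)
    [IsProbabilityMeasure μ] (T : Ω → Ω) (hT : Ergodic T μ)
    (f g : Ω → ℝ) (hf : Measurable f) (hg : Measurable g)
    (ε : ℝ) (hε : 0 < ε) (hfε : ∀ ω, ε ≤ f ω)
    (M : ℝ) (hfM : ∀ ω, |f ω| ≤ M) (hgM : ∀ ω, |g ω| ≤ M)
    (J : Ω → ellTwo →L[ℂ] ellTwo) (hsa : ∀ ω, IsSelfAdjoint (J ω))
    (hJ : ∀ ω, IsJacobiOp (fun n => jacobiA f T n ω) (fun n => jacobiB g T n ω) (J ω))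
    (S : Set ℝ) (hSc : IsCompact S)
    (hS : ∀ᵐ ω ∂μ, spectrum ℝ (J ω) = S)
    (L : ℂ → ℝ) (hLnn : ∀ z, 0 ≤ L z)
    (hL : ∀ z : ℂ, ∀ᵐ ω ∂μ,
      Tendsto (fun n : ℕ => Real.log ‖transferCocycle f g T z ω n‖ / n) atTop (nhds (L z)))
    (A : ℝ) (hA : 0 < A)
    (hAlim : ∀ᵐ ω ∂μ,
      Tendsto (fun n : ℕ => (∏ i ∈ Finset.Icc 1 n, jacobiA f T i ω) ^ ((n : ℝ)⁻¹)) atTop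
        (nhds A))
    (hL0 : ∀ E ∈ S, L (E : ℂ) = 0) :
    volume S ≤ ENNReal.ofReal (4 * A) ∧ 4 * A ≤ sSup S - sInf S ∧
      (S.OrdConnected → sSup S - sInf S = 4 * A ∧ volume S = ENNReal.ofReal (4 * A)) := by
  have hf0 : ∀ ω, 0 < f ω := fun ω => lt_of_lt_of_le hε (hfε ω)
  have ha0 : ∀ ω n, 0 < jacobiA f T (n + 1) ω := fun ω n => hf0 _
  have hTm : Measurable T := hT.measurable
  have hTn : ∀ n, Measurable (T^[n]) := fun n => hTm.iterate n
  have hma : ∀ n, Measurable (jacobiA f T n) := by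
    intro n
    cases n with
    | zero => exact measurable_const
    | succ n => exact hf.comp (hTn (n + 1))
  have hmb : ∀ n, Measurable (jacobiB g T n) := fun n => hg.comp (hTn n)
  -- the upper bound
  have hupper : ∀ δ : ℝ, 0 < δ → volume S ≤ ENNReal.ofReal (4 * Real.exp δ * A) := by
    intro δ hδ
    have h1 : ∀ᵐ E ∂(volume.restrict S), ∀ᵐ ω ∂μ, ∃ N : ℕ, ∀ n : ℕ, N ≤ n →
        |(jpol (fun n => jacobiA f T n ω) (fun n => jacobiB g T n ω) n).eval E|
          ≤ Real.exp (n * δ) := by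
      refine ae_restrict_of_forall_mem hSc.measurableSet fun E hE => ?_
      filter_upwards [hL (E : ℂ)] with ω hω
      rw [hL0 E hE] at hω
      have h2 := hω.eventually (gt_mem_nhds hδ)
      rw [← eventually_atTop]
      filter_upwards [h2, eventually_ne_atTop 0] with n hn hn0
      have hnpos : (0 : ℝ) < n := by positivity
      rw [div_lt_iff₀ hnpos, mul_comm] at hn
      obtain ⟨k, rfl⟩ : ∃ k, n = k + 1 := ⟨n - 1, by omega⟩
      have h3 := (cocycle_entry f g T (fun ω => (hf0 ω).ne') E ω k).1
      have h4 := Matrix.norm_entry_le_entrywise_sup_norm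
        (transferCocycle f g T (E : ℂ) ω (k + 1)) (i := 0) (j := 0)
      rw [h3, Complex.norm_real, Real.norm_eq_abs] at h4
      refine h4.trans ?_
      rcases (norm_nonneg (transferCocycle f g T (E : ℂ) ω (k + 1))).eq_or_lt with h5 | h5
      · rw [← h5]
        exact (Real.exp_pos _).le
      · exact (Real.log_le_iff_le_exp h5).mp hn.le
    rw [Measure.ae_ae_comm] at h1
    · obtain ⟨ω, hω, hωA⟩ := (h1.and hAlim).exists
      exact upper_part _ _ (ha0 ω) S hSc A δ hωA hω
    · have hset : {x : ℝ × Ω | ∃ N : ℕ, ∀ n : ℕ, N ≤ n →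
          |(jpol (fun n => jacobiA f T n x.2) (fun n => jacobiB g T n x.2) n).eval x.1|
          ≤ Real.exp (n * δ)} = ⋃ N : ℕ, ⋂ n : ℕ, ⋂ (_ : N ≤ n), {x : ℝ × Ω |
          |(jpol (fun n => jacobiA f T n x.2) (fun n => jacobiB g T n x.2) n).eval x.1|
          ≤ Real.exp (n * δ)} := by
        ext x
        simp
      rw [hset]
      refine MeasurableSet.iUnion fun N => MeasurableSet.iInter fun n =>
        MeasurableSet.iInter fun _ => measurableSet_le ?_ measurable_const
      exact (((measurable_jpol _ _ hma hmb n).1).comp measurable_swap).abs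
  have hU : volume S ≤ ENNReal.ofReal (4 * A) := by
    have ht : Tendsto (fun δ : ℝ => ENNReal.ofReal (4 * Real.exp δ * A))
        (nhdsWithin 0 (Set.Ioi 0)) (nhds (ENNReal.ofReal (4 * Real.exp 0 * A))) := by
      refine Tendsto.mono_left (Continuous.tendsto ?_ 0) nhdsWithin_le_nhds
      exact ENNReal.continuous_ofReal.comp (by fun_prop)
    rw [Real.exp_zero, mul_one] at ht
    refine ge_of_tendsto ht ?_
    filter_upwards [self_mem_nhdsWithin] with δ hδ using hupper δ hδ
  obtain ⟨ω, hωS, hωA⟩ := (hS.and hAlim).exists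
  have hne : S.Nonempty := hωS ▸ spec_nonempty (J ω) (hsa ω)
  have hLow : 4 * A ≤ sSup S - sInf S := by
    have := lower_part _ _ (ha0 ω) (J ω) (hJ ω) (hsa ω) (hωS ▸ hSc) A hωA
    rwa [hωS] at this
  refine ⟨hU, hLow, fun hoc => ?_⟩
  have hIcc : S = Set.Icc (sInf S) (sSup S) := by
    apply Set.Subset.antisymm
    · exact fun x hx => ⟨csInf_le hSc.bddBelow hx, le_csSup hSc.bddAbove hx⟩
    · exact hoc.out (hSc.sInf_mem hne) (hSc.sSup_mem hne)
  have hvol : volume S = ENNReal.ofReal (sSup S - sInf S) := by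
    conv_lhs => rw [hIcc]
    exact Real.volume_Icc
  have heq : sSup S - sInf S = 4 * A := by
    refine le_antisymm ?_ hLow
    rw [hvol] at hU
    exact (ENNReal.ofReal_le_ofReal_iff (by positivity)).mp hU
  exact ⟨heq, by rw [hvol, heq]⟩
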